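/- arXiv:1904.01327 — 3 statements merged into one kernel-verified Lean document; each statement's English description precedes it below -/
import Mathlib

section
/- Let Y be a real-valued random variable with E Y = 0, E Y² < ∞, and Y ≤ a almost surely for some constant a > 0. Then for every t > 0, E exp(t Y) ≤ 1 + t² g(t a) E Y² ≤ exp[ (e^{ta} − 1 − ta)/a² · E Y² ], where g(x) = (e^x − 1 − x)/x² for x ≠ 0 and g(0) = 1/2. -/
/-!
The pointwise inequality `eˣ ≤ 1 + x + g(b) x²` for `x ≤ b`, `0 < b`, expresses that `g` is
increasing. For `0 ≤ x ≤ b` it follows by comparing the power series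
`eˣ - 1 - x = ∑ xⁿ⁺² / (n+2)!` term by term with `(x/b)²` times the same series at `b`; for `x ≤ 0`
it follows from `eˣ ≤ 1 + x + x²/2` and `1/2 ≤ g(b)`. Taking `x = tY`, `b = ta` and integrating, the
linear term vanishes since `E Y = 0`, which gives the first bound. The second is `1 + u ≤ eᵘ`,
because `t² g(ta) = (e^{ta} - 1 - ta)/a²`.
-/

open MeasureTheory Filter
open scoped ProbabilityTheory

/-- `g x = (eˣ - 1 - x)/x²` for `x ≠ 0`, `g 0 = 1/2`. -/
noncomputable def gfun (x : ℝ) : ℝ :=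
  if x = 0 then 1 / 2 else (Real.exp x - 1 - x) / x ^ 2

lemma hasSum_exp_sub_one_sub (x : ℝ) :
    HasSum (fun n : ℕ => x ^ (n + 2) / ((n + 2).factorial : ℝ)) (Real.exp x - 1 - x) := by
  have h := NormedSpace.expSeries_div_hasSum_exp (𝔸 := ℝ) x
  rw [← Real.exp_eq_exp_ℝ] at h
  have h2 := (hasSum_nat_add_iff' 2).2 h
  have hval : Real.exp x - 1 - x
      = Real.exp x - ∑ i ∈ Finset.range 2, x ^ i / (i.factorial : ℝ) := by
    simp [Finset.sum_range_succ]
    ring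
  rw [hval]
  exact h2

lemma exp_le_quadratic_of_nonpos {x : ℝ} (hx : x ≤ 0) :
    Real.exp x ≤ 1 + x + x ^ 2 / 2 := by
  have h := Real.quadratic_le_exp_of_nonneg (x := -x) (by linarith)
  have hq : 0 ≤ 1 + x + x ^ 2 / 2 := by nlinarith [sq_nonneg (x + 1)]
  have hinv : Real.exp x * Real.exp (-x) = 1 := by rw [← Real.exp_add]; simp
  -- `(1 + x + x²/2)(1 - x + x²/2) = 1 + x⁴/4 ≥ 1`
  have hprod : 1 ≤ (1 + x + x ^ 2 / 2) * Real.exp (-x) := by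
    have := mul_le_mul_of_nonneg_left h hq
    nlinarith [sq_nonneg (x ^ 2)]
  exact le_of_mul_le_mul_right (hinv.trans_le hprod) (Real.exp_pos _)

/-- The monotonicity of `gfun` in the form needed here, cleared of denominators. -/
lemma exp_le_one_add_add_gfun_mul_sq {x b : ℝ} (hb : 0 < b) (hx : x ≤ b) :
    Real.exp x ≤ 1 + x + gfun b * x ^ 2 := by
  have hg : gfun b = (Real.exp b - 1 - b) / b ^ 2 := by simp [gfun, hb.ne']
  rcases le_total x 0 with h0 | h0
  · have hhalf : 1 / 2 ≤ gfun b := by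
      rw [hg, le_div_iff₀ (by positivity)]
      linarith [Real.quadratic_le_exp_of_nonneg hb.le]
    nlinarith [exp_le_quadratic_of_nonpos h0, sq_nonneg x]
  · have hle := hasSum_le (fun n => ?_) (hasSum_exp_sub_one_sub x)
      ((hasSum_exp_sub_one_sub b).mul_left (x ^ 2 / b ^ 2))
    · have : gfun b * x ^ 2 = x ^ 2 / b ^ 2 * (Real.exp b - 1 - b) := by rw [hg]; ring
      linarith
    · have hpow : x ^ n ≤ b ^ n := pow_le_pow_left₀ h0 hx n
      calc x ^ (n + 2) / ((n + 2).factorial : ℝ)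
          = x ^ 2 * x ^ n / ((n + 2).factorial : ℝ) := by ring
        _ ≤ x ^ 2 * b ^ n / ((n + 2).factorial : ℝ) := by gcongr
        _ = x ^ 2 / b ^ 2 * (b ^ (n + 2) / ((n + 2).factorial : ℝ)) := by
          field_simp
          ring

/-- The mgf bound used in the proof of Bennett's inequality: if `E Y = 0`, `E Y² < ∞` and
`Y ≤ a` a.s. with `a > 0`, then for every `t > 0`,
`E e^{tY} ≤ 1 + t² g(ta) E Y² ≤ exp((e^{ta} - 1 - ta)/a² · E Y²)`. -/
theorem mgf_bennett_bound
    {Ω : Type*} [MeasureSpace Ω] [IsProbabilityMeasure (ℙ : Measure Ω)]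
    (Y : Ω → ℝ) (a : ℝ)
    (hmeas : Measurable Y)
    (hint : Integrable Y)
    (hsq : Integrable (fun ω => (Y ω) ^ 2))
    (hmean : ∫ ω, Y ω = 0)
    (ha : 0 < a)
    (hbdd : ∀ᵐ ω, Y ω ≤ a) :
    ∀ t > (0 : ℝ),
      (∫ ω, Real.exp (t * Y ω)) ≤ 1 + t ^ 2 * gfun (t * a) * ∫ ω, (Y ω) ^ 2 ∧
      1 + t ^ 2 * gfun (t * a) * (∫ ω, (Y ω) ^ 2) ≤
        Real.exp ((Real.exp (t * a) - 1 - t * a) / a ^ 2 * ∫ ω, (Y ω) ^ 2) := by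
  intro t ht
  have hta : 0 < t * a := mul_pos ht ha
  constructor
  · have hlin : Integrable (fun ω => 1 + t * Y ω) := (integrable_const 1).add (hint.const_mul t)
    have hquad : Integrable (fun ω => t ^ 2 * gfun (t * a) * Y ω ^ 2) := hsq.const_mul _
    -- Integrability of the exponential is not needed: it is nonnegative, and the right side
    -- is integrable.
    calc (∫ ω, Real.exp (t * Y ω))
        ≤ ∫ ω, ((1 + t * Y ω) + t ^ 2 * gfun (t * a) * Y ω ^ 2) := by
          refine integral_mono_of_nonneg (ae_of_all _ fun ω => (Real.exp_pos _).le)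
            (hlin.add hquad) ?_
          filter_upwards [hbdd] with ω hω
          have := exp_le_one_add_add_gfun_mul_sq hta (mul_le_mul_of_nonneg_left hω ht.le)
          refine this.trans_eq ?_
          ring
      _ = 1 + t ^ 2 * gfun (t * a) * ∫ ω, (Y ω) ^ 2 := by
          rw [integral_add hlin hquad, integral_add (integrable_const 1) (hint.const_mul t),
            integral_const_mul, integral_const_mul, hmean]
          simp
  · have hcoef : t ^ 2 * gfun (t * a) = (Real.exp (t * a) - 1 - t * a) / a ^ 2 := by
      simp only [gfun, hta.ne', if_false]
      field_simp
    rw [hcoef, add_comm]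
    exact Real.add_one_le_exp _
end

section
/- The function h: [5, ∞) → ℝ defined by h(x) = 2 + x/(1 + x) − 2(1 − 1/x) log(1 + x) is negative and non-increasing on [5, ∞). -/
/-!
Write `h` for the function. For `5 ≤ a ≤ b`, splitting the product increment gives
`h a - h b = 2 (1/a - 1/b) log (1 + b) + 2 (1 - 1/a) (log (1 + b) - log (1 + a))
  - (1/(1 + a) - 1/(1 + b))`.
The middle term is nonnegative, and since `log (1 + b) ≥ 1` the first one dominates the last, as
`1/(1 + a) - 1/(1 + b) = (b - a)/((1 + a)(1 + b)) ≤ (b - a)/(a b) = 1/a - 1/b`.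
So `h` is antitone without any differentiation, and negativity reduces to `h 5 < 0`, that is to
`log 6 > 85/48`, which follows from `2 ^ 18 < 6 ^ 7`.
-/

lemma log_six_gt : (85 / 48 : ℝ) < Real.log 6 := by
  have h : Real.log ((2 : ℝ) ^ 18) < Real.log ((6 : ℝ) ^ 7) :=
    Real.log_lt_log (by norm_num) (by norm_num)
  rw [Real.log_pow, Real.log_pow] at h
  have := Real.log_two_gt_d9
  norm_num at h this ⊢
  linarith

lemma hfun_antitoneOn :
    AntitoneOn (fun x : ℝ => 2 + x / (1 + x) - 2 * (1 - 1 / x) * Real.log (1 + x))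
      (Set.Ici (5 : ℝ)) := by
  intro a ha b hb hab
  have ha5 : (5 : ℝ) ≤ a := ha
  have hb5 : (5 : ℝ) ≤ b := hb
  have hLb : 1 ≤ Real.log (1 + b) := by
    have := Real.log_le_log (by norm_num) (show (6 : ℝ) ≤ 1 + b by linarith)
    linarith [log_six_gt]
  have hL : Real.log (1 + a) ≤ Real.log (1 + b) :=
    Real.log_le_log (by linarith) (by linarith)
  have hinv : 0 ≤ 1 / a - 1 / b :=
    sub_nonneg.2 (one_div_le_one_div_of_le (by linarith) hab)
  have hinv_a : 0 ≤ 1 - 1 / a := by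
    rw [sub_nonneg, div_le_one (by linarith)]
    linarith
  have hdiff : b / (1 + b) - a / (1 + a) ≤ 1 / a - 1 / b := by
    have e1 : b / (1 + b) - a / (1 + a) = (b - a) / ((1 + a) * (1 + b)) := by
      have : 1 + a ≠ 0 := by linarith
      have : 1 + b ≠ 0 := by linarith
      field_simp
      ring
    have e2 : 1 / a - 1 / b = (b - a) / (a * b) := by
      have : a ≠ 0 := by linarith
      have : b ≠ 0 := by linarith
      field_simp
    rw [e1, e2]
    exact div_le_div_of_nonneg_left (by linarith) (by nlinarith) (by nlinarith)
  have h1 : 0 ≤ (1 / a - 1 / b) * (Real.log (1 + b) - 1) :=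
    mul_nonneg hinv (by linarith)
  have h2 : 0 ≤ (1 - 1 / a) * (Real.log (1 + b) - Real.log (1 + a)) :=
    mul_nonneg hinv_a (by linarith)
  show 2 + b / (1 + b) - 2 * (1 - 1 / b) * Real.log (1 + b) ≤
    2 + a / (1 + a) - 2 * (1 - 1 / a) * Real.log (1 + a)
  linarith

/-- The function `h x = 2 + x/(1 + x) − 2(1 − 1/x) log(1 + x)` is negative and
non-increasing on `[5, ∞)`. -/
theorem hfun_neg_antitone :
    (∀ x : ℝ, 5 ≤ x →
      2 + x / (1 + x) - 2 * (1 - 1 / x) * Real.log (1 + x) < 0) ∧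
    AntitoneOn (fun x : ℝ => 2 + x / (1 + x) - 2 * (1 - 1 / x) * Real.log (1 + x))
      (Set.Ici (5 : ℝ)) := by
  refine ⟨fun x hx => ?_, hfun_antitoneOn⟩
  have h := hfun_antitoneOn (Set.mem_Ici.2 le_rfl) (Set.mem_Ici.2 hx) hx
  refine lt_of_le_of_lt h ?_
  have := log_six_gt
  norm_num
  linarith
end

section
/- Let 0 < p ≤ 1, let X be a real-valued random variable with E|X|^p < ∞, and let t > 0, δ > 0. Set T = min(X, δ). Then E exp(t T) ≤ 1 + (e^{tδ} − 1)/δ^p · E|T|^p ≤ exp[ (e^{tδ} − 1)/δ^p · E|X|^p ]. -/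
/-!
For `0 ≤ x ≤ δ`, convexity of `exp` bounds `e^{tx}` by its chord on `[0, δ]`, giving
`e^{tx} ≤ 1 + (x/δ)(e^{tδ} - 1)`, and `x/δ ≤ (x/δ)^p` because `x/δ ≤ 1` and `p ≤ 1`. For `x ≤ 0` the
left side is at most `1`. This pointwise bound (`exp_mul_le_of_le`), integrated at `x = min(X, δ)`,
is the first inequality. The second is `|min(X, δ)| ≤ |X|` followed by `1 + y ≤ e^y`.
-/

open MeasureTheory
open scoped ProbabilityTheory

lemma abs_min_le_abs_of_pos (x : ℝ) {δ : ℝ} (hδ : 0 < δ) : |min x δ| ≤ |x| := by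
  rcases le_total x δ with h | h
  · rw [min_eq_left h]
  · rw [min_eq_right h, abs_of_pos hδ]
    exact h.trans (le_abs_self x)

lemma exp_mul_le_of_le {p t δ x : ℝ} (hp1 : p ≤ 1) (ht : 0 < t)
    (hδ : 0 < δ) (hx : x ≤ δ) :
    Real.exp (t * x) ≤ 1 + (Real.exp (t * δ) - 1) / δ ^ p * |x| ^ p := by
  have hc : 0 ≤ Real.exp (t * δ) - 1 := by
    have := Real.one_le_exp (mul_pos ht hδ).le
    linarith
  rcases le_or_gt x 0 with h | h
  · have h1 : Real.exp (t * x) ≤ 1 :=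
      Real.exp_le_one_iff.2 (mul_nonpos_of_nonneg_of_nonpos ht.le h)
    have h2 : 0 ≤ (Real.exp (t * δ) - 1) / δ ^ p * |x| ^ p := by positivity
    linarith
  · have hr0 : 0 < x / δ := div_pos h hδ
    have hr1 : x / δ ≤ 1 := (div_le_one hδ).2 hx
    have hpow : x / δ ≤ (x / δ) ^ p := Real.self_le_rpow_of_le_one hr0.le hr1 hp1
    -- The chord bound: `t * x` is the convex combination of `0` and `t * δ` with weight `x / δ`.
    have hconv := convexOn_exp.2 (Set.mem_univ (0 : ℝ)) (Set.mem_univ (t * δ))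
      (sub_nonneg.2 hr1) hr0.le (sub_add_cancel 1 (x / δ))
    have he : x / δ * (t * δ) = t * x := by field_simp
    simp only [smul_eq_mul, mul_zero, zero_add, Real.exp_zero, mul_one, he] at hconv
    calc Real.exp (t * x) ≤ 1 + (Real.exp (t * δ) - 1) * (x / δ) := by linarith
      _ ≤ 1 + (Real.exp (t * δ) - 1) * (x / δ) ^ p := by gcongr
      _ = 1 + (Real.exp (t * δ) - 1) / δ ^ p * |x| ^ p := by
        rw [Real.div_rpow h.le hδ.le, abs_of_pos h]
        ring

/-- The truncated-mgf bound used in the Fuk–Nagaev-type inequality: for `0 < p ≤ 1`,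
`E|X|^p < ∞`, `t, δ > 0` and `T = min(X, δ)`,
`E e^{tT} ≤ 1 + (e^{tδ} − 1)/δ^p · E|T|^p ≤ exp((e^{tδ} − 1)/δ^p · E|X|^p)`. -/
theorem mgf_truncated_min_bound
    {Ω : Type*} [MeasureSpace Ω] [IsProbabilityMeasure (ℙ : Measure Ω)]
    (X : Ω → ℝ) (p t δ : ℝ)
    (hmeas : Measurable X)
    (hp : 0 < p) (hp1 : p ≤ 1)
    (hmom : Integrable (fun ω => |X ω| ^ p))
    (ht : 0 < t) (hδ : 0 < δ) :
    (∫ ω, Real.exp (t * min (X ω) δ)) ≤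
        1 + (Real.exp (t * δ) - 1) / δ ^ p * ∫ ω, |min (X ω) δ| ^ p ∧
    1 + (Real.exp (t * δ) - 1) / δ ^ p * (∫ ω, |min (X ω) δ| ^ p) ≤
      Real.exp ((Real.exp (t * δ) - 1) / δ ^ p * ∫ ω, |X ω| ^ p) := by
  have hc : 0 ≤ (Real.exp (t * δ) - 1) / δ ^ p := by
    have := Real.one_le_exp (mul_pos ht hδ).le
    exact div_nonneg (by linarith) (Real.rpow_nonneg hδ.le p)
  have hle : ∀ ω, |min (X ω) δ| ^ p ≤ |X ω| ^ p := fun ω =>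
    Real.rpow_le_rpow (abs_nonneg _) (abs_min_le_abs_of_pos _ hδ) hp.le
  have hT : Integrable (fun ω => |min (X ω) δ| ^ p) := by
    refine hmom.mono' (Measurable.aestronglyMeasurable (by fun_prop)) (Filter.Eventually.of_forall fun ω => ?_)
    rw [Real.norm_of_nonneg (by positivity)]
    exact hle ω
  constructor
  · have hint := hT.const_mul ((Real.exp (t * δ) - 1) / δ ^ p)
    calc (∫ ω, Real.exp (t * min (X ω) δ))
        ≤ ∫ ω, (1 + (Real.exp (t * δ) - 1) / δ ^ p * |min (X ω) δ| ^ p) :=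
          integral_mono_of_nonneg (Filter.Eventually.of_forall fun ω => (Real.exp_pos _).le)
            ((integrable_const 1).add hint)
            (Filter.Eventually.of_forall fun ω => exp_mul_le_of_le hp1 ht hδ (min_le_right _ _))
      _ = _ := by
          rw [integral_add (integrable_const 1) hint, integral_const_mul]
          simp
  · have hmono := mul_le_mul_of_nonneg_left (integral_mono hT hmom hle) hc
    rw [add_comm]
    exact (add_le_add_left hmono 1).trans (Real.add_one_le_exp _)
end
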